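/- For every ε > 0 there exists δ > 0 such that for every M with 1 ≤ M ≤ 1 + δ and every M-quasisymmetric increasing homeomorphism H : [0,1] → [0,1] with H(0) = 0 and H(1) = 1, one has |H(x) − x| ≤ ε for all x ∈ [0,1]. -/

import Mathlib

/-- `H` is an `M`-quasisymmetric map on `[0,1]`: for all `x` and `t > 0` with
`x - t, x + t ∈ [0,1]`, `M⁻¹ ≤ (H(x+t) - H(x))/(H(x) - H(x-t)) ≤ M`. -/
def IsQSOn (M : ℝ) (H : ℝ → ℝ) : Prop :=
  ∀ x t : ℝ, 0 < t → x - t ∈ Set.Icc (0:ℝ) 1 → x + t ∈ Set.Icc (0:ℝ) 1 →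
    M⁻¹ ≤ (H (x + t) - H x) / (H x - H (x - t)) ∧
      (H (x + t) - H x) / (H x - H (x - t)) ≤ M

/-! Quasisymmetry bounds the second difference `H (x + t) + H (x - t) - 2 * H x` by
`k = (M - 1) / (M + 1)`, and the displacement `f x = H x - x` has the same second differences and
vanishes at `0` and `1`. Every point of `[0, 1]` is the midpoint of an endpoint and another point of
`[0, 1]`, so a bound `|f| ≤ C` improves to `|f| ≤ (C + k) / 2`; hence `sup |f| ≤ k`. -/

open Set

section SecondDifference

variable {E : Type*} [SeminormedAddCommGroup E] [NormedSpace ℝ E]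

theorem norm_le_half_of_norm_sub_two_smul_le {u v : E} {C ε : ℝ} (hu : ‖u‖ ≤ C)
    (h : ‖u - (2 : ℝ) • v‖ ≤ ε) : ‖v‖ ≤ (C + ε) / 2 := by
  have two_mul_norm_le : 2 * ‖v‖ ≤ C + ε :=
    calc 2 * ‖v‖ = ‖(2 : ℝ) • v‖ := by rw [norm_smul, Real.norm_two]
      _ ≤ ‖u‖ + ‖u - (2 : ℝ) • v‖ := norm_le_norm_add_norm_sub u _
      _ ≤ C + ε := add_le_add hu h
  linarith

variable {f : ℝ → E} {a b ε : ℝ}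

theorem norm_le_half_of_norm_second_difference_le {C : ℝ} (ha : f a = 0) (hb : f b = 0)
    (hC : ∀ x ∈ Icc a b, ‖f x‖ ≤ C)
    (hf : ∀ x t, 0 ≤ t → x - t ∈ Icc a b → x + t ∈ Icc a b →
      ‖f (x + t) + f (x - t) - (2 : ℝ) • f x‖ ≤ ε)
    {x : ℝ} (hx : x ∈ Icc a b) : ‖f x‖ ≤ (C + ε) / 2 := by
  obtain ⟨hax, hxb⟩ := hx
  rcases le_total (x - a) (b - x) with left_half | right_half
  · have reflected_mem : x + (x - a) ∈ Icc a b := ⟨by linarith, by linarith⟩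
    have h := hf x (x - a) (sub_nonneg.2 hax)
      (by rw [sub_sub_cancel]; exact left_mem_Icc.2 (hax.trans hxb)) reflected_mem
    rw [sub_sub_cancel, ha, add_zero] at h
    exact norm_le_half_of_norm_sub_two_smul_le (hC _ reflected_mem) h
  · have reflected_mem : x - (b - x) ∈ Icc a b := ⟨by linarith, by linarith⟩
    have h := hf x (b - x) (sub_nonneg.2 hxb) reflected_mem
      (by rw [add_sub_cancel]; exact right_mem_Icc.2 (hax.trans hxb))
    rw [add_sub_cancel, hb, zero_add] at h
    exact norm_le_half_of_norm_sub_two_smul_le (hC _ reflected_mem) h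

theorem norm_le_of_norm_second_difference_le (ha : f a = 0) (hb : f b = 0)
    (hbdd : BddAbove ((fun x ↦ ‖f x‖) '' Icc a b))
    (hf : ∀ x t, 0 ≤ t → x - t ∈ Icc a b → x + t ∈ Icc a b →
      ‖f (x + t) + f (x - t) - (2 : ℝ) • f x‖ ≤ ε)
    {x : ℝ} (hx : x ∈ Icc a b) : ‖f x‖ ≤ ε := by
  obtain ⟨S, hS⟩ := Real.exists_isLUB ⟨_, mem_image_of_mem _ hx⟩ hbdd
  have norm_le_S : ∀ y ∈ Icc a b, ‖f y‖ ≤ S := fun y hy ↦ hS.1 (mem_image_of_mem _ hy)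
  have S_le_half : S ≤ (S + ε) / 2 := hS.2 <| forall_mem_image.2 fun _ hy ↦
    norm_le_half_of_norm_second_difference_le ha hb norm_le_S hf hy
  linarith [norm_le_S x hx]

end SecondDifference

theorem abs_sub_le_of_inv_le_div_of_div_le {M p q : ℝ} (hM : 0 < M) (hp : 0 < p)
    (hlower : M⁻¹ ≤ q / p) (hupper : q / p ≤ M) :
    |q - p| ≤ (M - 1) / (M + 1) * (q + p) := by
  have q_le : q ≤ M * p := (div_le_iff₀ hp).1 hupper
  have p_le : p ≤ M * q := (inv_mul_le_iff₀ hM).1 ((le_div_iff₀ hp).1 hlower)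
  rw [abs_sub_le_iff, div_mul_eq_mul_div, le_div_iff₀ (by linarith), le_div_iff₀ (by linarith)]
  constructor <;> linarith

namespace IsQSOn

variable {M : ℝ} {H : ℝ → ℝ}

theorem abs_second_difference_le (hH : IsQSOn M H) (hM : 0 < M)
    (hmono : StrictMonoOn H (Icc 0 1)) {x t : ℝ} (ht : 0 ≤ t) (hl : x - t ∈ Icc (0 : ℝ) 1)
    (hr : x + t ∈ Icc (0 : ℝ) 1) :
    |H (x + t) + H (x - t) - 2 * H x| ≤ (M - 1) / (M + 1) * (H (x + t) - H (x - t)) := by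
  rcases ht.eq_or_lt with rfl | ht
  · simp [two_mul]
  have hx : x ∈ Icc (0 : ℝ) 1 := ⟨by linarith [hl.1], by linarith [hr.2]⟩
  have left_increment_pos : 0 < H x - H (x - t) := sub_pos.2 (hmono hl hx (sub_lt_self x ht))
  obtain ⟨hlower, hupper⟩ := hH x t ht hl hr
  convert abs_sub_le_of_inv_le_div_of_div_le hM left_increment_pos hlower hupper using 2 <;> ring

end IsQSOn

theorem stmt4_general {M : ℝ} {H : ℝ → ℝ} (hM : 1 ≤ M) (hmono : StrictMonoOn H (Icc 0 1))
    (h0 : H 0 = 0) (h1 : H 1 = 1) (hH : IsQSOn M H) {x : ℝ} (hx : x ∈ Icc (0 : ℝ) 1) :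
    |H x - x| ≤ (M - 1) / (M + 1) := by
  have H_mem : MapsTo H (Icc 0 1) (Icc 0 1) := by
    simpa only [h0, h1] using hmono.monotoneOn.mapsTo_Icc
  have displacement_bddAbove : BddAbove ((fun y ↦ ‖H y - y‖) '' Icc (0 : ℝ) 1) :=
    ⟨1, forall_mem_image.2 fun _ hy ↦ Real.dist_le_of_mem_Icc_01 (H_mem hy) hy⟩
  refine norm_le_of_norm_second_difference_le (f := fun y ↦ H y - y) (by simp [h0]) (by simp [h1])
    displacement_bddAbove (fun y t ht hl hr ↦ ?_) hx
  have hk : 0 ≤ (M - 1) / (M + 1) := div_nonneg (by linarith) (by linarith)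
  have increment_le_one : H (y + t) - H (y - t) ≤ 1 := by
    linarith [(H_mem hl).1, (H_mem hr).2]
  calc ‖H (y + t) - (y + t) + (H (y - t) - (y - t)) - (2 : ℝ) • (H y - y)‖
      = |H (y + t) + H (y - t) - 2 * H y| := by
        rw [Real.norm_eq_abs, smul_eq_mul]; ring_nf
    _ ≤ (M - 1) / (M + 1) * (H (y + t) - H (y - t)) :=
        hH.abs_second_difference_le (by linarith) hmono ht hl hr
    _ ≤ (M - 1) / (M + 1) := mul_le_of_le_one_right hk increment_le_one

theorem stmt4 :
    ∀ ε : ℝ, 0 < ε → ∃ δ : ℝ, 0 < δ ∧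
      ∀ M : ℝ, 1 ≤ M → M ≤ 1 + δ →
        ∀ H : ℝ → ℝ,
          StrictMonoOn H (Set.Icc (0:ℝ) 1) →
          ContinuousOn H (Set.Icc (0:ℝ) 1) →
          Set.SurjOn H (Set.Icc (0:ℝ) 1) (Set.Icc (0:ℝ) 1) →
          H 0 = 0 → H 1 = 1 →
          IsQSOn M H →
          ∀ x ∈ Set.Icc (0:ℝ) 1, |H x - x| ≤ ε :=
  fun ε hε ↦ ⟨ε, hε, fun _ hM hMε _ hmono _ _ h0 h1 hH _ hx ↦
    (stmt4_general hM hmono h0 h1 hH hx).trans <|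
      (div_le_self (sub_nonneg.2 hM) (by linarith)).trans (sub_le_iff_le_add'.2 hMε)⟩
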